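/- Let p > 3 and h ∈ (1, p−2). For every c > 0 there exists L₀ ≥ 1 such that for all L ≥ L₀ and all m ≥ 0: ∫_{m+1}^{∞} ∫_{−β}^{m} (L + β − α)^{1−p} ⟨α⟩^{−h} dα dβ ≤ c ⟨m⟩^{−h}; in particular the double integral converges. -/

import Mathlib

open MeasureTheory intervalIntegral

/-- The Japanese bracket `⟨x⟩ = (1 + x²)^{1/2}`. -/
noncomputable def jap (x : ℝ) : ℝ := Real.sqrt (1 + x ^ 2)

/-!
Fix `q` with `max 1 h < q < p - 2`. For `α ≤ m` the weight `L + β - α` dominates both `L + β - m`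
and `⟨m - α⟩`, so `(L + β - α)^{1-p} ≤ (L + β - m)^{1-p+q} ⟨m - α⟩^{-q}`. Since
`⟨m⟩ ≤ ⟨m - α⟩ + ⟨α⟩`, one of the two brackets on the right is at least `⟨m⟩ / 2`; as `h ≤ q`, this
converts `⟨m - α⟩^{-q} ⟨α⟩^{-h}` into `⟨m⟩^{-h}` times a function of `α` whose integral does not
depend on `m`. What remains is `∫ (L + β - m)^{1-p+q} dβ`, a negative power of `L + 1`.
-/

theorem one_le_jap (x : ℝ) : 1 ≤ jap x :=
  Real.one_le_sqrt.2 (le_add_of_nonneg_right (sq_nonneg x))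

theorem jap_pos (x : ℝ) : 0 < jap x := zero_lt_one.trans_le (one_le_jap x)

theorem jap_rpow_nonneg (x s : ℝ) : 0 ≤ jap x ^ s := Real.rpow_nonneg (jap_pos x).le s

theorem continuous_jap : Continuous jap := by
  unfold jap
  fun_prop

theorem jap_le_one_add_abs (x : ℝ) : jap x ≤ 1 + |x| := by
  simpa only [jap, Real.norm_eq_abs, sq_abs] using sqrt_one_add_norm_sq_le x

theorem jap_add_le (x y : ℝ) : jap (x + y) ≤ jap x + jap y := by
  have jap_sq (z : ℝ) : jap z ^ 2 = 1 + z ^ 2 := Real.sq_sqrt (by positivity)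
  have abs_le_jap (z : ℝ) : |z| ≤ jap z := Real.abs_le_sqrt (by linarith)
  have hxy : x * y ≤ jap x * jap y := calc
    x * y ≤ |x| * |y| := (le_abs_self _).trans_eq (abs_mul x y)
    _ ≤ jap x * jap y :=
      mul_le_mul (abs_le_jap x) (abs_le_jap y) (abs_nonneg y) (jap_pos x).le
  exact Real.sqrt_le_iff.2
    ⟨(add_pos (jap_pos x) (jap_pos y)).le, by linarith [jap_sq x, jap_sq y]⟩

theorem integrable_jap_rpow_neg {q : ℝ} (hq : 1 < q) : Integrable fun x ↦ jap x ^ (-q) := by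
  have h := integrable_rpow_neg_one_add_norm_sq (E := ℝ) (μ := volume) (r := q) (by simpa using hq)
  refine h.congr (.of_forall fun x ↦ ?_)
  simp only [jap, Real.norm_eq_abs, sq_abs]
  exact Real.rpow_div_two_eq_sqrt _ (by positivity)

theorem rpow_neg_mul_rpow_neg_le_of_le_add {a b c h q : ℝ} (ha : 0 < a) (hb : 0 < b) (hc : 0 < c)
    (hcab : c ≤ a + b) (hh : 0 ≤ h) (hhq : h ≤ q) :
    a ^ (-q) * b ^ (-h) ≤ 2 ^ h * c ^ (-h) * (a ^ (-q) + b ^ (-q)) := by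
  have rpow_neg_le {z : ℝ} (hz : c ≤ 2 * z) : z ^ (-h) ≤ 2 ^ h * c ^ (-h) := calc
    z ^ (-h) ≤ (c / 2) ^ (-h) :=
      Real.rpow_le_rpow_of_nonpos (by positivity) (by linarith) (by linarith)
    _ = 2 ^ h * c ^ (-h) := by
      rw [Real.div_rpow hc.le zero_le_two, Real.rpow_neg zero_le_two, div_inv_eq_mul, mul_comm]
  rcases le_total a b with hab | hba
  · calc a ^ (-q) * b ^ (-h)
        ≤ a ^ (-q) * (2 ^ h * c ^ (-h)) := by gcongr; exact rpow_neg_le (by linarith)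
      _ = 2 ^ h * c ^ (-h) * a ^ (-q) := mul_comm _ _
      _ ≤ _ := by gcongr; exact le_add_of_nonneg_right (by positivity)
  · calc a ^ (-q) * b ^ (-h)
        = a ^ (-h) * a ^ (h - q) * b ^ (-h) := by rw [← Real.rpow_add ha]; ring_nf
      _ ≤ 2 ^ h * c ^ (-h) * b ^ (h - q) * b ^ (-h) := by
          gcongr ?_ * ?_ * _
          · exact rpow_neg_le (by linarith)
          · exact Real.rpow_le_rpow_of_nonpos hb hba (by linarith)
      _ = 2 ^ h * c ^ (-h) * b ^ (-q) := by rw [mul_assoc, ← Real.rpow_add hb]; ring_nf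
      _ ≤ _ := by gcongr; exact le_add_of_nonneg_left (by positivity)

theorem rpow_mul_jap_rpow_neg_le {h q s d r x y : ℝ} (hh : 0 ≤ h) (hhq : h ≤ q)
    (hsq : s + q ≤ 0) (hd : 0 < d) (hdr : d ≤ r) (hr : jap (x - y) ≤ r) :
    r ^ s * jap y ^ (-h) ≤
      2 ^ h * jap x ^ (-h) * d ^ (s + q) * (jap (x - y) ^ (-q) + jap y ^ (-q)) := by
  have hpeetre : jap (x - y) ^ (-q) * jap y ^ (-h) ≤
      2 ^ h * jap x ^ (-h) * (jap (x - y) ^ (-q) + jap y ^ (-q)) :=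
    rpow_neg_mul_rpow_neg_le_of_le_add (jap_pos _) (jap_pos y) (jap_pos x)
      (by simpa using jap_add_le (x - y) y) hh hhq
  calc r ^ s * jap y ^ (-h)
      = r ^ (s + q) * r ^ (-q) * jap y ^ (-h) := by
        rw [← Real.rpow_add (hd.trans_le hdr), add_neg_cancel_right]
    _ ≤ d ^ (s + q) * jap (x - y) ^ (-q) * jap y ^ (-h) := by
        gcongr ?_ * ?_ * _
        · exact jap_rpow_nonneg y _
        · exact Real.rpow_nonneg (hd.le.trans hdr) _
        · exact Real.rpow_le_rpow_of_nonpos hd hdr hsq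
        · exact Real.rpow_le_rpow_of_nonpos (jap_pos _) hr (by linarith)
    _ = d ^ (s + q) * (jap (x - y) ^ (-q) * jap y ^ (-h)) := mul_assoc _ _ _
    _ ≤ d ^ (s + q) * (2 ^ h * jap x ^ (-h) * (jap (x - y) ^ (-q) + jap y ^ (-q))) := by gcongr
    _ = _ := by ring

theorem integral_jap_sub_rpow_add_jap_rpow {q : ℝ} (hq : 1 < q) (x : ℝ) :
    ∫ y, (jap (x - y) ^ (-q) + jap y ^ (-q)) = 2 * ∫ y, jap y ^ (-q) := by
  have hint := integrable_jap_rpow_neg hq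
  rw [integral_add (hint.comp_sub_left x) hint,
    integral_sub_left_eq_self (fun y ↦ jap y ^ (-q)) volume x, two_mul]

theorem stronglyMeasurable_intervalIntegral {X E : Type*} [MeasurableSpace X]
    [NormedAddCommGroup E] [NormedSpace ℝ E] {f : X → ℝ → E}
    (hf : StronglyMeasurable (Function.uncurry f)) {a b : X → ℝ}
    (ha : Measurable a) (hb : Measurable b) :
    StronglyMeasurable fun x ↦ ∫ y in a x..b x, f x y := by
  have setIntegral_Ioc {u v : X → ℝ} (hu : Measurable u) (hv : Measurable v) :
      StronglyMeasurable fun x ↦ ∫ y in Set.Ioc (u x) (v x), f x y := by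
    have hS : MeasurableSet {z : X × ℝ | u z.1 < z.2 ∧ z.2 ≤ v z.1} :=
      (measurableSet_lt (hu.comp measurable_fst) measurable_snd).inter
        (measurableSet_le measurable_snd (hv.comp measurable_fst))
    simp_rw [← MeasureTheory.integral_indicator measurableSet_Ioc]
    exact (hf.indicator hS).integral_prod_right'
  exact (setIntegral_Ioc ha hb).sub (setIntegral_Ioc hb ha)

theorem integral_Ioi_add_rpow_of_lt {a c s : ℝ} (hs : s < -1) (hc : 0 < c + a) :
    ∫ x in Set.Ioi c, (x + a) ^ s = -(c + a) ^ (s + 1) / (s + 1) := by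
  have hshift := (measurePreserving_add_right volume a).setIntegral_preimage_emb
    (measurableEmbedding_addRight a) (fun x : ℝ ↦ x ^ s) (Set.Ioi (c + a))
  rw [Set.preimage_add_const_Ioi, add_sub_cancel_right] at hshift
  rw [hshift, integral_Ioi_rpow_of_lt hs hc]

/-- The inner integral `∫_{-β}^m (L + β - α)^{1-p} ⟨α⟩^{-h} dα` over the slice of the interior
region at a fixed value of the null coordinate `β`. -/
noncomputable def sliceIntegral (p h L m β : ℝ) : ℝ :=
  ∫ α in (-β)..m, (L + β - α) ^ (1 - p) * jap α ^ (-h)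

theorem stronglyMeasurable_sliceIntegral (p h L m : ℝ) :
    StronglyMeasurable (sliceIntegral p h L m) := by
  have hjap : Measurable jap := continuous_jap.measurable
  exact stronglyMeasurable_intervalIntegral
    (Measurable.stronglyMeasurable (by unfold Function.uncurry; fun_prop))
    measurable_neg measurable_const

theorem sliceIntegral_nonneg {p h L m β : ℝ} (hβ : -β ≤ m) (hL : m ≤ L + β) :
    0 ≤ sliceIntegral p h L m β :=
  integral_nonneg hβ fun α hα ↦
    mul_nonneg (Real.rpow_nonneg (by linarith [hα.2]) _) (jap_rpow_nonneg α _)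

theorem sliceIntegral_le {p h q L m β : ℝ} (hh : 0 ≤ h) (hhq : h ≤ q) (hq : 1 < q)
    (hqp : 1 - p + q ≤ 0) (hβ : -β ≤ m) (hL : 1 ≤ L + β - m) :
    sliceIntegral p h L m β ≤
      2 ^ h * jap m ^ (-h) * (2 * ∫ x, jap x ^ (-q)) * (L + β - m) ^ (1 - p + q) := by
  let C := 2 ^ h * jap m ^ (-h) * (L + β - m) ^ (1 - p + q)
  let g (α : ℝ) := jap (m - α) ^ (-q) + jap α ^ (-q)
  have hC : 0 ≤ C := mul_nonneg (mul_nonneg (by positivity) (jap_rpow_nonneg m _))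
    (Real.rpow_nonneg (by linarith) _)
  have hg : Integrable g :=
    ((integrable_jap_rpow_neg hq).comp_sub_left m).add (integrable_jap_rpow_neg hq)
  have hg_nonneg (α : ℝ) : 0 ≤ g α := add_nonneg (jap_rpow_nonneg _ _) (jap_rpow_nonneg _ _)
  have hpointwise : ∀ α ∈ Set.Ioc (-β) m, (L + β - α) ^ (1 - p) * jap α ^ (-h) ≤ C * g α := by
    intro α ⟨_, hα⟩
    have hjap : jap (m - α) ≤ L + β - α := calc
      jap (m - α) ≤ 1 + |m - α| := jap_le_one_add_abs _
      _ ≤ L + β - α := by rw [abs_of_nonneg (sub_nonneg.2 hα)]; linarith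
    exact rpow_mul_jap_rpow_neg_le hh hhq hqp (by linarith) (by linarith) hjap
  calc sliceIntegral p h L m β
      = ∫ α in Set.Ioc (-β) m, (L + β - α) ^ (1 - p) * jap α ^ (-h) := integral_of_le hβ
    _ ≤ ∫ α in Set.Ioc (-β) m, C * g α := by
        refine integral_mono_of_nonneg ?_ (hg.const_mul C).integrableOn
          (ae_restrict_of_forall_mem measurableSet_Ioc hpointwise)
        exact ae_restrict_of_forall_mem measurableSet_Ioc fun α hα ↦
          mul_nonneg (Real.rpow_nonneg (by linarith [hα.2]) _) (jap_rpow_nonneg α _)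
    _ ≤ ∫ α, C * g α := setIntegral_le_integral (hg.const_mul C)
        (.of_forall fun α ↦ mul_nonneg hC (hg_nonneg α))
    _ = C * (2 * ∫ x, jap x ^ (-q)) := by
        rw [MeasureTheory.integral_const_mul, integral_jap_sub_rpow_add_jap_rpow hq]
    _ = _ := by ring

theorem integrableOn_sliceIntegral_and_integral_le {p h q L m : ℝ} (hh : 0 ≤ h) (hhq : h ≤ q)
    (hq : 1 < q) (hqp : q < p - 2) (hL : 0 ≤ L) (hm : 0 ≤ m) :
    IntegrableOn (sliceIntegral p h L m) (Set.Ioi (m + 1)) ∧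
      ∫ β in Set.Ioi (m + 1), sliceIntegral p h L m β ≤
        2 ^ h * (2 * ∫ x, jap x ^ (-q)) * ((L + 1) ^ (-(p - 2 - q)) / (p - 2 - q)) *
          jap m ^ (-h) := by
  let K := 2 ^ h * jap m ^ (-h) * (2 * ∫ x, jap x ^ (-q))
  have hexp : 1 - p + q < -1 := by linarith
  have hshift (β : ℝ) : L + β - m = β + (L - m) := by ring
  have hmajorant : IntegrableOn (fun β ↦ K * (L + β - m) ^ (1 - p + q)) (Set.Ioi (m + 1)) := by
    simp_rw [hshift]
    exact (integrableOn_add_rpow_Ioi_of_lt hexp (by linarith)).const_mul K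
  have hle : ∀ β ∈ Set.Ioi (m + 1), sliceIntegral p h L m β ≤ K * (L + β - m) ^ (1 - p + q) := by
    intro β (hβ : m + 1 < β)
    exact sliceIntegral_le hh hhq hq (by linarith) (by linarith) (by linarith)
  have hint : IntegrableOn (sliceIntegral p h L m) (Set.Ioi (m + 1)) := by
    refine hmajorant.mono' (stronglyMeasurable_sliceIntegral p h L m).aestronglyMeasurable
      (ae_restrict_of_forall_mem measurableSet_Ioi fun β hβ ↦ ?_)
    have hmβ : m + 1 < β := hβ
    rw [Real.norm_of_nonneg (sliceIntegral_nonneg (by linarith) (by linarith))]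
    exact hle β hβ
  refine ⟨hint, ?_⟩
  calc ∫ β in Set.Ioi (m + 1), sliceIntegral p h L m β
      ≤ ∫ β in Set.Ioi (m + 1), K * (L + β - m) ^ (1 - p + q) :=
        setIntegral_mono_on hint hmajorant measurableSet_Ioi hle
    _ = K * ((L + 1) ^ (-(p - 2 - q)) / (p - 2 - q)) := by
        simp_rw [hshift]
        rw [MeasureTheory.integral_const_mul, integral_Ioi_add_rpow_of_lt hexp (by linarith),
          neg_div, ← div_neg]
        ring_nf
    _ = _ := by ring

theorem interior_region_estimate_four_general (p h : ℝ) (hp : 3 < p) (hh1 : 0 ≤ h)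
    (hh2 : h < p - 2) :
    ∀ c : ℝ, 0 < c → ∃ L₀ : ℝ, 1 ≤ L₀ ∧ ∀ L : ℝ, L₀ ≤ L → ∀ m : ℝ, 0 ≤ m →
      IntegrableOn
        (fun β => ∫ α in (-β)..m, (L + β - α) ^ (1 - p) * jap α ^ (-h))
        (Set.Ioi (m + 1)) ∧
      (∫ β in Set.Ioi (m + 1), ∫ α in (-β)..m, (L + β - α) ^ (1 - p) * jap α ^ (-h))
        ≤ c * jap m ^ (-h) := by
  intro c hc
  obtain ⟨q, hq, hqp⟩ := exists_between (max_lt (by linarith : 1 < p - 2) hh2)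
  obtain ⟨hq1, hhq⟩ := max_lt_iff.1 hq
  let bound (L : ℝ) := 2 ^ h * (2 * ∫ x, jap x ^ (-q)) * ((L + 1) ^ (-(p - 2 - q)) / (p - 2 - q))
  have hbound : Filter.Tendsto bound Filter.atTop (nhds 0) := by
    have hpow := (tendsto_rpow_neg_atTop (sub_pos.2 hqp)).comp
      (Filter.tendsto_atTop_add_const_right _ (1 : ℝ) Filter.tendsto_id)
    simpa [bound] using
      (hpow.div_const (p - 2 - q)).const_mul (2 ^ h * (2 * ∫ x, jap x ^ (-q)))
  obtain ⟨L₀, hL₀⟩ := ((hbound.eventually_lt_const hc).and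
    (Filter.eventually_ge_atTop 1)).exists_forall_of_atTop
  refine ⟨L₀, (hL₀ L₀ le_rfl).2, fun L hL m hm ↦ ?_⟩
  obtain ⟨hsmall, hL1⟩ := hL₀ L hL
  obtain ⟨hint, hle⟩ := integrableOn_sliceIntegral_and_integral_le hh1 hhq.le hq1 hqp
    (zero_le_one.trans hL1) hm
  exact ⟨hint, hle.trans (mul_le_mul_of_nonneg_right hsmall.le (jap_rpow_nonneg m _))⟩

theorem interior_region_estimate_four (p h : ℝ) (hp : 3 < p) (hh1 : 1 < h) (hh2 : h < p - 2) :
    ∀ c : ℝ, 0 < c → ∃ L₀ : ℝ, 1 ≤ L₀ ∧ ∀ L : ℝ, L₀ ≤ L → ∀ m : ℝ, 0 ≤ m →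
      IntegrableOn
        (fun β => ∫ α in (-β)..m, (L + β - α) ^ (1 - p) * jap α ^ (-h))
        (Set.Ioi (m + 1)) ∧
      (∫ β in Set.Ioi (m + 1), ∫ α in (-β)..m, (L + β - α) ^ (1 - p) * jap α ^ (-h))
        ≤ c * jap m ^ (-h) :=
  interior_region_estimate_four_general p h hp (zero_le_one.trans hh1.le) hh2
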